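/- Let λ, σ, τ > 0 be real, p, q complex with Re(p) > 0, Re(q) > 0, and η₁, η₂ complex with Re(η₁) > 0. Assume that the function t ↦ t^{η₁-1}(1-t)^{-η₂} E_λ(−p/t^σ) E_λ(−q/(1-t)^τ) is integrable on (0,1), so that B_{p,q}^{λ;σ,τ}(η₁, 1−η₂) is defined by the same integral formula. Then B_{p,q}^{λ;σ,τ}(η₁, 1−η₂) = Σ_{n=0}^∞ ((η₂)_n / n!) · B_{p,q}^{λ;σ,τ}(η₁+n, 1), where (η₂)_n = η₂(η₂+1)⋯(η₂+n−1) is the Pochhammer symbol. -/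

import Mathlib

open MeasureTheory Set Complex

/-- The classical Mittag-Leffler function `E_λ(x) = Σ xⁿ / Γ(λn+1)`. -/
noncomputable def mlE (lam : ℝ) (x : ℂ) : ℂ :=
  ∑' n : ℕ, x ^ n / Complex.Gamma (lam * n + 1)

/-- The extended beta function
`B_{p,q}^{λ;σ,τ}(η₁,η₂) = ∫₀¹ t^{η₁-1}(1-t)^{η₂-1} E_λ(-p/t^σ) E_λ(-q/(1-t)^τ) dt`. -/
noncomputable def extBeta (lam sig tau : ℝ) (p q e1 e2 : ℂ) : ℂ :=
  ∫ t in Ioo (0:ℝ) 1,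
    (t : ℂ) ^ (e1 - 1) * (1 - (t : ℂ)) ^ (e2 - 1) *
      mlE lam (-p / (t : ℂ) ^ (sig : ℂ)) * mlE lam (-q / (1 - (t : ℂ)) ^ (tau : ℂ))

/-!
On `(0, 1)` the factor `(1 - t) ^ (-η₂)` is expanded in its binomial series, and sum and integral
are exchanged. The interchange needs `(1 - t) ^ (-r) * ‖t ^ (η₁ - 1) * E_λ(-p / t ^ σ) *
E_λ(-q / (1 - t) ^ τ)‖` to be integrable for some `r > 0` with `Re η₂ ≤ r`, because
`‖(η₂)_n‖ ≤ C (r)_n`. If `Re η₂ > 0`, this is the hypothesis with `r = Re η₂`.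

If `Re η₂ ≤ 0`, the growth of `E_λ(-q / (1 - t) ^ τ)` as `t → 1` has to be controlled. The factor
`E_λ(-p / t ^ σ)` is analytic at `t = 1`, hence vanishes identically or to finite order there, so
the hypothesis says that `f t = E_λ(-q t ^ λ)` is integrable on `(0, ∞)` against some negative power
of `1 + t`. Its Laplace transform therefore converges for `Re s > 0`, grows at most polynomially as
`Re s → 0`, and equals `s ^ (λ - 1) / (s ^ λ + q)` by analytic continuation from large `s`.
Interpolating between these two facts leaves, at the cost of a factor `(Re s) ^ (-κ)` with `κ > 0`
arbitrarily small, a power `< 1` of the resolvent, which is integrable along vertical lines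
uniformly as they approach the imaginary axis. Fourier inversion on the line `Re s = c / t` gives
`f t = O(t ^ κ)`, that is, `E_λ(-q / (1 - t) ^ τ) = O((1 - t) ^ (-κ))` for every `κ > 0`.
-/

section BinomialSeries

theorem norm_add_natCast_le {e : ℂ} {r : ℝ} (hr : 0 < r) (he : e.re ≤ r) (k : ℕ) :
    ‖e + k‖ ≤ (r + k) * (1 + ‖e‖ ^ 2 / (r + k) ^ 2) := by
  have : 0 < r + k := by positivity
  have hre : (e.re + k) ^ 2 ≤ (r + k) ^ 2 + e.re ^ 2 := by
    rcases le_total 0 (e.re + k) with _ | _ <;> nlinarith [Nat.cast_nonneg (α := ℝ) k]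
  have hsq : ‖e + k‖ ^ 2 ≤ (r + k) ^ 2 + ‖e‖ ^ 2 := by
    simp only [Complex.sq_norm, normSq_apply, add_re, add_im, natCast_re, natCast_im, add_zero]
    linarith
  refine abs_le_of_sq_le_sq' (hsq.trans ?_) (by positivity) |>.2
  calc (r + k) ^ 2 + ‖e‖ ^ 2
      ≤ (r + k) ^ 2 + ‖e‖ ^ 2 + (‖e‖ ^ 2 + (‖e‖ ^ 2 / (r + k)) ^ 2) :=
        le_add_of_nonneg_right (by positivity)
    _ = ((r + k) * (1 + ‖e‖ ^ 2 / (r + k) ^ 2)) ^ 2 := by field_simp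

theorem exists_norm_ascPochhammer_eval_le {e : ℂ} {r : ℝ} (hr : 0 < r) (he : e.re ≤ r) :
    ∃ C, ∀ n : ℕ, ‖(ascPochhammer ℂ n).eval e‖ ≤ C * (ascPochhammer ℝ n).eval r := by
  have hsum : Summable fun k : ℕ => ‖e‖ ^ 2 / (r + k) ^ 2 := by
    have := ((Real.summable_one_div_nat_add_rpow r 2).2 one_lt_two).mul_left (‖e‖ ^ 2)
    simpa only [Real.rpow_two, sq_abs, mul_one_div, add_comm] using this
  have hprod (n : ℕ) : ‖(ascPochhammer ℂ n).eval e‖ ≤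
      (∏ k ∈ Finset.range n, (1 + ‖e‖ ^ 2 / (r + k) ^ 2)) * (ascPochhammer ℝ n).eval r := by
    induction n with
    | zero => simp
    | succ n ih =>
      have hpos := ascPochhammer_pos n r hr
      rw [ascPochhammer_succ_eval, ascPochhammer_succ_eval, norm_mul, Finset.prod_range_succ]
      calc _ ≤ _ := mul_le_mul ih (norm_add_natCast_le hr he n) (norm_nonneg _) (by positivity)
        _ = _ := by ring
  refine ⟨Real.exp (∑' k : ℕ, ‖e‖ ^ 2 / (r + k) ^ 2), fun n => ?_⟩
  refine (hprod n).trans (mul_le_mul_of_nonneg_right ?_ (ascPochhammer_pos n r hr).le)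
  exact (Real.prod_one_add_le_exp_sum _ fun k => by positivity).trans
    (Real.exp_le_exp.2 (hsum.sum_le_tsum _ fun k _ => by positivity))

theorem choose_add_natCast_sub_one {K : Type*} [Field K] [CharZero K] [BinomialRing K]
    (a : K) (n : ℕ) :
    Ring.choose (a + n - 1) n = (ascPochhammer K n).eval a / (n.factorial : K) := by
  rw [← Ring.multichoose_eq, eq_div_iff (by exact_mod_cast n.factorial_ne_zero), mul_comm,
    ← nsmul_eq_mul, Ring.factorial_nsmul_multichoose_eq_ascPochhammer,
    Polynomial.ascPochhammer_smeval_eq_eval]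

theorem hasSum_one_sub_cpow_neg (a : ℂ) {z : ℂ} (hz : ‖z‖ < 1) :
    HasSum (fun n : ℕ => (ascPochhammer ℂ n).eval a / (n.factorial : ℂ) * z ^ n)
      ((1 - z) ^ (-a)) := by
  have h := (one_div_one_sub_cpow_hasFPowerSeriesOnBall_zero a).hasSum (y := z)
    (by simpa [Metric.mem_eball, ← ofReal_norm] using hz)
  simpa only [FormalMultilinearSeries.ofScalars_apply_eq, choose_add_natCast_sub_one,
    smul_eq_mul, zero_add, one_div, ← cpow_neg] using h

theorem hasSum_one_sub_rpow_neg (a : ℝ) {x : ℝ} (hx : ‖x‖ < 1) :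
    HasSum (fun n : ℕ => (ascPochhammer ℝ n).eval a / (n.factorial : ℝ) * x ^ n)
      ((1 - x) ^ (-a)) := by
  have h := (Real.one_div_one_sub_rpow_hasFPowerSeriesOnBall_zero a).hasSum (y := x)
    (by simpa [Metric.mem_eball, ← ofReal_norm] using hx)
  have hx1 : 0 ≤ 1 - x := by linarith [(abs_lt.1 hx).2]
  simpa only [FormalMultilinearSeries.ofScalars_apply_eq, choose_add_natCast_sub_one,
    smul_eq_mul, zero_add, one_div, ← Real.rpow_neg hx1] using h

theorem hasSum_ascPochhammer_mul_integral {g : ℝ → ℂ} {e : ℂ} {r : ℝ} (hr : 0 < r)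
    (he : e.re ≤ r) (hgm : AEStronglyMeasurable g (volume.restrict (Ioo 0 1)))
    (hg : IntegrableOn (fun t : ℝ => (1 - t) ^ (-r) * ‖g t‖) (Ioo 0 1)) :
    HasSum (fun n : ℕ => (ascPochhammer ℂ n).eval e / (n.factorial : ℂ) *
        ∫ t in Ioo (0 : ℝ) 1, (t : ℂ) ^ n * g t)
      (∫ t in Ioo (0 : ℝ) 1, (1 - (t : ℂ)) ^ (-e) * g t) := by
  obtain ⟨C, hC⟩ := exists_norm_ascPochhammer_eval_le hr he
  have hmajorant (t : ℝ) (ht : t ∈ Ioo (0 : ℝ) 1) :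
      HasSum (fun n : ℕ => C * ((ascPochhammer ℝ n).eval r / (n.factorial : ℝ) * t ^ n * ‖g t‖))
        (C * ((1 - t) ^ (-r) * ‖g t‖)) := by
    have ht1 : ‖t‖ < 1 := by rw [Real.norm_of_nonneg ht.1.le]; exact ht.2
    exact ((hasSum_one_sub_rpow_neg r ht1).mul_right ‖g t‖).mul_left C
  have h := hasSum_integral_of_dominated_convergence (μ := volume.restrict (Ioo (0 : ℝ) 1))
    (F := fun (n : ℕ) (t : ℝ) =>
      (ascPochhammer ℂ n).eval e / (n.factorial : ℂ) * ((t : ℂ) ^ n * g t))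
    (f := fun t : ℝ => (1 - (t : ℂ)) ^ (-e) * g t)
    (fun n t => C * ((ascPochhammer ℝ n).eval r / (n.factorial : ℝ) * t ^ n * ‖g t‖))
    ?_ ?_ ?_ ?_ ?_
  · simpa only [integral_const_mul] using h
  · exact fun n => ((by fun_prop : Continuous fun t : ℝ => (t : ℂ) ^ n).aestronglyMeasurable.mul
      hgm).const_mul _
  · intro n
    filter_upwards [ae_restrict_mem measurableSet_Ioo] with t ht
    have ht0 : 0 ≤ t := ht.1.le
    rw [norm_mul, norm_mul, norm_div, norm_pow, norm_natCast, norm_real,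
      Real.norm_of_nonneg ht0, mul_assoc, ← mul_assoc C, mul_div_assoc']
    gcongr
    exact hC n
  · filter_upwards [ae_restrict_mem measurableSet_Ioo] with t ht
    exact (hmajorant t ht).summable
  · refine (hg.const_mul C).congr ?_
    filter_upwards [ae_restrict_mem measurableSet_Ioo] with t ht
    exact (hmajorant t ht).tsum_eq.symm
  · filter_upwards [ae_restrict_mem measurableSet_Ioo] with t ht
    have ht1 : ‖(t : ℂ)‖ < 1 := by rw [norm_real, Real.norm_of_nonneg ht.1.le]; exact ht.2
    simpa only [mul_assoc] using (hasSum_one_sub_cpow_neg e ht1).mul_right (g t)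

end BinomialSeries

section MittagLeffler

theorem rpow_mul_exp_neg_le_Gamma_add_one {R a : ℝ} (hR : 0 ≤ R) (ha : 0 ≤ a) :
    R ^ a * Real.exp (-R) ≤ Real.Gamma (a + 1) := by
  have hΓ : IntegrableOn (fun x : ℝ => Real.exp (-x) * x ^ (a + 1 - 1)) (Ioi 0) :=
    Real.GammaIntegral_convergent (by positivity)
  rw [Real.Gamma_eq_integral (by positivity), ← integral_exp_neg_Ioi, ← integral_const_mul]
  calc ∫ x in Ioi R, R ^ a * Real.exp (-x) ≤ ∫ x in Ioi R, Real.exp (-x) * x ^ (a + 1 - 1) := by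
        refine setIntegral_mono_on ((integrableOn_exp_neg_Ioi R).const_mul _)
          (hΓ.mono_set (Ioi_subset_Ioi hR)) measurableSet_Ioi fun x (hx : R < x) => ?_
        rw [mul_comm, add_sub_cancel_right]
        gcongr
    _ ≤ ∫ x in Ioi 0, Real.exp (-x) * x ^ (a + 1 - 1) := by
        refine setIntegral_mono_set hΓ ?_ (Ioi_subset_Ioi hR).eventuallyLE
        filter_upwards [ae_restrict_mem measurableSet_Ioi] with x (hx : 0 < x)
        exact mul_nonneg (Real.exp_pos _).le (Real.rpow_nonneg hx.le _)

variable {lam : ℝ}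

theorem Gamma_mul_natCast_add_one (lam : ℝ) (n : ℕ) :
    Complex.Gamma (lam * n + 1) = (Real.Gamma (lam * n + 1) : ℂ) := by
  rw [← Gamma_ofReal]
  push_cast
  rfl

theorem norm_Gamma_mul_natCast_add_one (hlam : 0 < lam) (n : ℕ) :
    ‖Complex.Gamma (lam * n + 1)‖ = Real.Gamma (lam * n + 1) := by
  rw [Gamma_mul_natCast_add_one, norm_real,
    Real.norm_of_nonneg (Real.Gamma_pos_of_pos (by positivity)).le]

theorem exists_norm_mlE_term_le (hlam : 0 < lam) {M : ℝ} (hM : 0 < M) :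
    ∃ C : ℝ, ∀ (n : ℕ) (x : ℂ), ‖x‖ ≤ M →
      ‖x ^ n / Complex.Gamma (lam * n + 1)‖ ≤ C * (1 / 2) ^ n := by
  set R : ℝ := (2 * M) ^ lam⁻¹
  have hR : 0 ≤ R := by positivity
  refine ⟨Real.exp R, fun n x hx => ?_⟩
  have hΓ : (2 * M) ^ n * Real.exp (-R) ≤ Real.Gamma (lam * n + 1) := by
    have := rpow_mul_exp_neg_le_Gamma_add_one hR (show 0 ≤ lam * n by positivity)
    rwa [Real.rpow_mul hR, Real.rpow_inv_rpow (by positivity) hlam.ne', Real.rpow_natCast] at this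
  rw [norm_div, norm_pow, norm_Gamma_mul_natCast_add_one hlam,
    div_le_iff₀ (Real.Gamma_pos_of_pos (by positivity))]
  calc ‖x‖ ^ n ≤ M ^ n := by gcongr
    _ = Real.exp R * (1 / 2) ^ n * ((2 * M) ^ n * Real.exp (-R)) := by
        rw [Real.exp_neg, mul_pow, one_div, inv_pow]
        field_simp
    _ ≤ Real.exp R * (1 / 2) ^ n * Real.Gamma (lam * n + 1) := by gcongr

theorem differentiable_mlE (hlam : 0 < lam) : Differentiable ℂ (mlE lam) := by
  intro x
  obtain ⟨C, hC⟩ := exists_norm_mlE_term_le hlam (show 0 < ‖x‖ + 1 by positivity)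
  have hball : DifferentiableOn ℂ (mlE lam) (Metric.ball 0 (‖x‖ + 1)) :=
    differentiableOn_tsum_of_summable_norm (summable_geometric_two.mul_left C)
      (fun n => by fun_prop) Metric.isOpen_ball
      fun n w hw => hC n w (by simpa using (Metric.mem_ball.1 hw).le)
  exact hball.differentiableAt (Metric.isOpen_ball.mem_nhds (by simp))

end MittagLeffler

section LaplaceTransform

variable {E : Type*} [NormedAddCommGroup E] [NormedSpace ℂ E] {f g : ℝ → E} {s z : ℂ}

/-- The Laplace transform `s ↦ ∫₀^∞ e^{-st} f(t) dt`, with value `0` where the integral diverges. -/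
noncomputable def laplaceTransform (f : ℝ → E) (s : ℂ) : E :=
  ∫ t in Ioi (0 : ℝ), cexp (-(s * t)) • f t

/-- Absolute convergence at `s` of the integral defining the Laplace transform. -/
def LaplaceConvergent (f : ℝ → E) (s : ℂ) : Prop :=
  IntegrableOn (fun t : ℝ => cexp (-(s * t)) • f t) (Ioi 0)

theorem norm_cexp_neg_mul_ofReal (s : ℂ) (t : ℝ) : ‖cexp (-(s * t))‖ = Real.exp (-(s.re * t)) := by
  rw [norm_exp, neg_re, re_mul_ofReal]

theorem laplaceConvergent_const (hs : 0 < s.re) (a : E) :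
    LaplaceConvergent (fun _ => a) s := by
  have := integrableOn_exp_mul_complex_Ioi (a := -s) (by simpa using hs) 0
  simp only [neg_mul] at this
  exact this.smul_const a

theorem laplaceTransform_const (hs : 0 < s.re) (a : ℂ) :
    laplaceTransform (fun _ => a) s = a / s := by
  have := integral_exp_mul_complex_Ioi (a := -s) (by simpa using hs) 0
  simp only [neg_mul, ofReal_zero, mul_zero, exp_zero, neg_div_neg_eq] at this
  simp only [laplaceTransform, smul_eq_mul, integral_mul_const, this, one_div_mul_eq_div]

theorem LaplaceConvergent.sub (hf : LaplaceConvergent f s) (hg : LaplaceConvergent g s) :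
    LaplaceConvergent (fun t => f t - g t) s := by
  simp only [LaplaceConvergent, smul_sub]
  exact Integrable.sub hf hg

theorem laplaceTransform_sub (hf : LaplaceConvergent f s) (hg : LaplaceConvergent g s) :
    laplaceTransform (fun t => f t - g t) s = laplaceTransform f s - laplaceTransform g s := by
  simp only [laplaceTransform, smul_sub]
  exact integral_sub hf hg

theorem LaplaceConvergent.of_re_le (hf : LaplaceConvergent f z) (h : z.re ≤ s.re) :
    LaplaceConvergent f s := by
  have hmul : IntegrableOn
      (fun t : ℝ => cexp (-((s - z) * t)) • cexp (-(z * t)) • f t) (Ioi 0) := by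
    refine Integrable.bdd_smul (φ := fun t : ℝ => cexp (-((s - z) * t))) hf 1
      (Continuous.aestronglyMeasurable (by fun_prop)) ?_
    filter_upwards [ae_restrict_mem measurableSet_Ioi] with t (ht : 0 < t)
    rw [norm_cexp_neg_mul_ofReal, Real.exp_le_one_iff, sub_re]
    nlinarith
  refine hmul.congr_fun (fun t _ => ?_) measurableSet_Ioi
  simp only [smul_smul, ← exp_add]
  ring_nf

theorem norm_mul_cexp_neg_smul_le {b c t : ℝ} (hcb : c < b) (ht : 0 ≤ t) (hz : b ≤ z.re) (v : E) :
    ‖(cexp (-(z * t)) * -(t : ℂ)) • v‖ ≤ (b - c)⁻¹ * ‖cexp (-((c : ℂ) * t)) • v‖ := by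
  rw [norm_smul, norm_smul, norm_mul, norm_cexp_neg_mul_ofReal, norm_cexp_neg_mul_ofReal, norm_neg,
    norm_real, Real.norm_of_nonneg ht, ofReal_re, ← mul_assoc]
  refine mul_le_mul_of_nonneg_right ?_ (norm_nonneg v)
  have hlin : (b - c) * t ≤ Real.exp ((b - c) * t) := by
    linarith [Real.add_one_le_exp ((b - c) * t)]
  rw [inv_mul_eq_div, le_div_iff₀ (by linarith)]
  calc Real.exp (-(z.re * t)) * t * (b - c)
      ≤ Real.exp (-(b * t)) * ((b - c) * t) := by
        rw [mul_assoc, mul_comm t]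
        have : 0 ≤ b - c := by linarith
        gcongr
    _ ≤ Real.exp (-(b * t)) * Real.exp ((b - c) * t) := by gcongr
    _ = Real.exp (-(c * t)) := by rw [← Real.exp_add]; ring_nf

theorem LaplaceConvergent.differentiableAt (hf : LaplaceConvergent f z) (h : z.re < s.re) :
    DifferentiableAt ℂ (laplaceTransform f) s := by
  obtain ⟨c, hzc, hcs⟩ := exists_between h
  obtain ⟨b, hcb, hbs⟩ := exists_between hcs
  have hfc : LaplaceConvergent f c := hf.of_re_le (by simpa using hzc.le)
  have hfs : LaplaceConvergent f s := hf.of_re_le h.le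
  have hfm : AEStronglyMeasurable f (volume.restrict (Ioi 0)) := by
    have := (Continuous.aestronglyMeasurable (μ := volume.restrict (Ioi 0))
      (by fun_prop : Continuous fun t : ℝ => cexp (z * t))).smul hf.aestronglyMeasurable
    refine this.congr (.of_forall fun t => ?_)
    simp only [smul_smul, ← exp_add, add_neg_cancel, exp_zero, one_smul, Pi.smul_apply']
  have hmeas {k : ℝ → ℂ} (hk : Continuous k) :
      AEStronglyMeasurable (fun t => k t • f t) (volume.restrict (Ioi 0)) :=
    hk.aestronglyMeasurable.smul hfm
  refine (hasDerivAt_integral_of_dominated_loc_of_deriv_le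
    (F := fun s t => cexp (-(s * t)) • f t)
    (F' := fun (s : ℂ) (t : ℝ) => (cexp (-(s * t)) * -(t : ℂ)) • f t)
    (bound := fun t : ℝ => (b - c)⁻¹ * ‖cexp (-((c : ℂ) * t)) • f t‖)
    ((isOpen_lt continuous_const continuous_re).mem_nhds hbs)
    (.of_forall fun s => hmeas (by fun_prop)) hfs (hmeas (by fun_prop)) ?_
    (hfc.norm.const_mul _) ?_).2.differentiableAt
  · filter_upwards [ae_restrict_mem measurableSet_Ioi] with t (ht : 0 < t) w (hw : b < w.re)
    exact norm_mul_cexp_neg_smul_le hcb ht.le hw.le (f t)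
  · refine .of_forall fun t w _ => ?_
    have := ((hasDerivAt_mul_const (t : ℂ) (x := w)).neg).cexp.smul_const (f t)
    exact this

theorem exp_neg_mul_le_inv_one_add_pow {c t : ℝ} (hc : 0 < c) (ht : 0 ≤ t) (N : ℕ) :
    Real.exp (-(c * t)) ≤ Real.exp c * N.factorial / c ^ N * ((1 + t) ^ N)⁻¹ := by
  have h := Real.pow_div_factorial_le_exp (c * (1 + t)) (by positivity) N
  rw [mul_pow, div_le_iff₀ (by positivity)] at h
  have hexp : Real.exp (-(c * t)) = Real.exp c / Real.exp (c * (1 + t)) := by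
    rw [← Real.exp_sub]; ring_nf
  rw [hexp, ← div_eq_mul_inv, div_div, div_le_div_iff₀ (by positivity) (by positivity)]
  calc Real.exp c * (c ^ N * (1 + t) ^ N)
      ≤ Real.exp c * (Real.exp (c * (1 + t)) * N.factorial) := by gcongr
    _ = Real.exp c * N.factorial * Real.exp (c * (1 + t)) := by ring

theorem norm_cexp_neg_mul_smul_le {t : ℝ} (hs : 0 < s.re) (ht : 0 ≤ t) (N : ℕ) (v : E) :
    ‖cexp (-(s * t)) • v‖ ≤
      Real.exp s.re * N.factorial / s.re ^ N * (((1 + t) ^ N)⁻¹ * ‖v‖) := by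
  rw [norm_smul, norm_cexp_neg_mul_ofReal, ← mul_assoc]
  gcongr
  exact exp_neg_mul_le_inv_one_add_pow hs ht N

theorem laplaceConvergent_of_integrableOn_inv_pow {N : ℕ} (hfm : AEStronglyMeasurable f)
    (hf : IntegrableOn (fun t => ((1 + t) ^ N)⁻¹ * ‖f t‖) (Ioi 0)) (hs : 0 < s.re) :
    LaplaceConvergent f s := by
  refine (hf.const_mul (Real.exp s.re * N.factorial / s.re ^ N)).mono'
    ((Continuous.aestronglyMeasurable (by fun_prop)).smul hfm.restrict) ?_
  filter_upwards [ae_restrict_mem measurableSet_Ioi] with t (ht : 0 < t)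
  exact norm_cexp_neg_mul_smul_le hs ht.le N (f t)

theorem norm_laplaceTransform_le {N : ℕ}
    (hf : IntegrableOn (fun t => ((1 + t) ^ N)⁻¹ * ‖f t‖) (Ioi 0)) (hs : 0 < s.re) :
    ‖laplaceTransform f s‖ ≤ Real.exp s.re * N.factorial / s.re ^ N *
      ∫ t in Ioi (0 : ℝ), ((1 + t) ^ N)⁻¹ * ‖f t‖ := by
  rw [← integral_const_mul]
  refine norm_integral_le_of_norm_le (hf.const_mul _) ?_
  filter_upwards [ae_restrict_mem measurableSet_Ioi] with t (ht : 0 < t)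
  exact norm_cexp_neg_mul_smul_le hs ht.le N (f t)

open scoped FourierTransform Real

theorem norm_le_integral_of_norm_fourier_le [CompleteSpace E] {u : ℝ → E} {H : ℝ → ℝ} {t : ℝ}
    (hu : Integrable u) (hut : ContinuousAt u t) (hH : Integrable H)
    (hle : ∀ᵐ w, ‖𝓕 u w‖ ≤ H w) : ‖u t‖ ≤ ∫ w, H w := by
  have hcont : Continuous (𝓕 u) := VectorFourier.fourierIntegral_continuous
    Real.continuous_fourierChar (by exact continuous_inner) hu
  have hFu : Integrable (𝓕 u) := hH.mono' hcont.aestronglyMeasurable hle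
  rw [← hu.fourierInv_fourier_eq hFu hut, Real.fourierInv_eq_fourier_neg]
  exact (VectorFourier.norm_fourierIntegral_le_integral_norm _ _ _ _ _).trans
    (integral_mono_ae hFu.norm hH hle)

theorem fourier_indicator_cexp_neg_smul (f : ℝ → E) (c w : ℝ) :
    𝓕 ((Ioi (0 : ℝ)).indicator fun t => cexp (-((c : ℂ) * t)) • f t) w =
      laplaceTransform f (c + (2 * π * w : ℝ) * I) := by
  rw [Real.fourier_real_eq_integral_exp_smul, laplaceTransform,
    ← integral_indicator measurableSet_Ioi]
  refine integral_congr_ae (.of_forall fun t => ?_)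
  simp only [indicator]
  split_ifs
  · rw [smul_smul, ← exp_add]
    congr 2
    push_cast
    ring
  · exact smul_zero _

theorem norm_le_integral_of_norm_laplaceTransform_le [CompleteSpace E] {c t : ℝ} {H : ℝ → ℝ}
    (ht : 0 < t) (hf : LaplaceConvergent f c) (hft : ContinuousAt f t) (hH : Integrable H)
    (hle : ∀ᵐ y : ℝ, ‖laplaceTransform f (c + y * I)‖ ≤ H y) :
    ‖f t‖ ≤ Real.exp (c * t) / (2 * π) * ∫ y, H y := by
  set u : ℝ → E := (Ioi (0 : ℝ)).indicator fun t => cexp (-((c : ℂ) * t)) • f t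
  have hut : ContinuousAt u t := by
    refine ContinuousAt.congr (f := fun t : ℝ => cexp (-((c : ℂ) * t)) • f t) (by fun_prop) ?_
    filter_upwards [Ioi_mem_nhds ht] with x hx
    exact (indicator_of_mem hx fun t : ℝ => cexp (-((c : ℂ) * t)) • f t).symm
  have hscale : Measure.QuasiMeasurePreserving (fun w : ℝ => 2 * π * w) := by
    refine ⟨by fun_prop, ?_⟩
    rw [Real.map_volume_mul_left (by positivity)]
    exact Measure.smul_absolutelyContinuous
  have hbound : ‖u t‖ ≤ ∫ w, H (2 * π * w) := by
    refine norm_le_integral_of_norm_fourier_le ((integrable_indicator_iff measurableSet_Ioi).2 hf)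
      hut (hH.comp_mul_left' (by positivity)) ?_
    filter_upwards [hscale.ae hle] with w hw
    rwa [fourier_indicator_cexp_neg_smul]
  have hut_norm : ‖u t‖ = Real.exp (-(c * t)) * ‖f t‖ := by
    simp only [u, indicator_of_mem (mem_Ioi.2 ht), norm_smul, norm_cexp_neg_mul_ofReal, ofReal_re]
  rw [hut_norm, Measure.integral_comp_mul_left, smul_eq_mul, abs_of_pos (by positivity),
    Real.exp_neg, inv_mul_eq_div, div_le_iff₀ (Real.exp_pos _)] at hbound
  calc ‖f t‖ ≤ (2 * π)⁻¹ * (∫ y, H y) * Real.exp (c * t) := hbound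
    _ = Real.exp (c * t) / (2 * π) * ∫ y, H y := by ring

end LaplaceTransform

section Relaxation

variable {lam : ℝ} {q : ℂ}

theorem laplaceConvergent_rpow {a c : ℝ} (ha : -1 < a) (hc : 0 < c) :
    LaplaceConvergent (fun t : ℝ => ((t ^ a : ℝ) : ℂ)) c := by
  have h := (integrableOn_rpow_mul_exp_neg_mul_rpow ha one_pos hc).ofReal (𝕜 := ℂ)
  refine IntegrableOn.congr_fun h (fun t _ => ?_) measurableSet_Ioi
  simp [mul_comm]

theorem integral_rpow_mul_exp_neg_mul {a c : ℝ} (ha : -1 < a) (hc : 0 < c) :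
    ∫ t in Ioi (0 : ℝ), t ^ a * Real.exp (-(c * t)) = Real.Gamma (a + 1) / c ^ (a + 1) := by
  have h := Real.integral_rpow_mul_exp_neg_mul_Ioi (a := a + 1) (by linarith) hc
  rwa [Real.div_rpow zero_le_one hc.le, Real.one_rpow, one_div_mul_eq_div,
    add_sub_cancel_right] at h

theorem hasSum_laplaceTransform_tsum_rpow {a : ℕ → ℂ} {b : ℕ → ℝ} {c : ℝ} (hb : ∀ n, -1 < b n)
    (hc : 0 < c) (hsum : Summable fun n => ‖a n‖ * (Real.Gamma (b n + 1) / c ^ (b n + 1))) :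
    HasSum (fun n => a n * ((Real.Gamma (b n + 1) / c ^ (b n + 1) : ℝ) : ℂ))
      (laplaceTransform (fun t : ℝ => ∑' n, a n * ((t ^ b n : ℝ) : ℂ)) c) := by
  have hterm (n : ℕ) (t : ℝ) : cexp (-(c * t)) * (a n * ((t ^ b n : ℝ) : ℂ)) =
      a n * ((t ^ b n * Real.exp (-(c * t)) : ℝ) : ℂ) := by
    push_cast
    ring
  have hnorm (n : ℕ) : ∫ t in Ioi (0 : ℝ), ‖cexp (-(c * t)) * (a n * ((t ^ b n : ℝ) : ℂ))‖ =
      ‖a n‖ * (Real.Gamma (b n + 1) / c ^ (b n + 1)) := by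
    rw [← integral_rpow_mul_exp_neg_mul (hb n) hc, ← integral_const_mul]
    refine setIntegral_congr_fun measurableSet_Ioi fun t (ht : 0 < t) => ?_
    simp only [hterm, norm_mul, norm_real, Real.norm_of_nonneg (Real.rpow_nonneg ht.le _),
      Real.norm_of_nonneg (Real.exp_pos _).le]
  have hint (n : ℕ) :
      IntegrableOn (fun t : ℝ => cexp (-(c * t)) * (a n * ((t ^ b n : ℝ) : ℂ))) (Ioi 0) := by
    simpa only [IntegrableOn, smul_eq_mul, mul_left_comm] using
      Integrable.const_mul (laplaceConvergent_rpow (hb n) hc) (a n)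
  have h := hasSum_integral_of_summable_integral_norm hint (by simpa only [hnorm] using hsum)
  simpa only [← tsum_mul_left, laplaceTransform, smul_eq_mul, hterm, integral_const_mul,
    integral_complex_ofReal, integral_rpow_mul_exp_neg_mul (hb _) hc] using h

/-- The function `t ↦ E_λ(-q t^λ)`, the solution of the fractional relaxation equation; its Laplace
transform is elementary. -/
noncomputable def mlRelaxation (lam : ℝ) (q : ℂ) (t : ℝ) : ℂ :=
  mlE lam (-q * ((t ^ lam : ℝ) : ℂ))

theorem continuous_mlRelaxation (hlam : 0 < lam) (q : ℂ) : Continuous (mlRelaxation lam q) :=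
  (differentiable_mlE hlam).continuous.comp
    (continuous_const.mul (continuous_ofReal.comp (Real.continuous_rpow_const hlam.le)))

theorem mlRelaxation_eq_tsum {t : ℝ} (ht : 0 ≤ t) :
    mlRelaxation lam q t =
      ∑' n : ℕ, (-q) ^ n / Complex.Gamma (lam * n + 1) * ((t ^ (lam * n) : ℝ) : ℂ) := by
  refine tsum_congr fun n => ?_
  rw [Real.rpow_mul ht, Real.rpow_natCast, mul_pow, ofReal_pow]
  ring

theorem hasSum_laplaceTransform_mlRelaxation (hlam : 0 < lam) {c : ℝ} (hc : 0 < c)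
    (hq : ‖-q / ((c ^ lam : ℝ) : ℂ)‖ < 1) :
    HasSum (fun n : ℕ => (c : ℂ)⁻¹ * (-q / ((c ^ lam : ℝ) : ℂ)) ^ n)
      (laplaceTransform (mlRelaxation lam q) c) := by
  have hΓ (n : ℕ) : Real.Gamma (lam * n + 1) ≠ 0 := (Real.Gamma_pos_of_pos (by positivity)).ne'
  have hpow (n : ℕ) : c ^ (lam * n + 1) = c * (c ^ lam) ^ n := by
    rw [Real.rpow_add_one hc.ne', Real.rpow_mul hc.le, Real.rpow_natCast, mul_comm]
  have hsum := hasSum_laplaceTransform_tsum_rpow (b := fun n : ℕ => lam * n) (c := c)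
    (a := fun n => (-q) ^ n / Complex.Gamma (lam * n + 1))
    (fun n => by linarith [show 0 ≤ lam * n by positivity]) hc ?_
  · convert hsum using 1
    · funext n
      have hΓ₀ : (Real.Gamma (lam * n + 1) : ℂ) ≠ 0 := ofReal_ne_zero.2 (hΓ n)
      rw [Gamma_mul_natCast_add_one, hpow, div_pow]
      push_cast
      field_simp
    · exact setIntegral_congr_fun measurableSet_Ioi fun t (ht : 0 < t) => by
        simp only [mlRelaxation_eq_tsum ht.le]
  · refine ((summable_geometric_of_norm_lt_one hq).norm.mul_left c⁻¹).congr fun n => ?_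
    have hΓ₀ := hΓ n
    rw [norm_div, norm_Gamma_mul_natCast_add_one hlam, hpow, norm_pow, norm_pow, norm_div,
      norm_neg, norm_real, Real.norm_of_nonneg (by positivity), div_pow]
    field_simp

theorem laplaceTransform_mlRelaxation_of_lt (hlam : 0 < lam) {c : ℝ} (hc : 0 < c)
    (hq : ‖q‖ < c ^ lam) :
    laplaceTransform (mlRelaxation lam q) c * (c * (((c ^ lam : ℝ) : ℂ) + q)) =
      ((c ^ lam : ℝ) : ℂ) := by
  have hcl : 0 < c ^ lam := Real.rpow_pos_of_pos hc lam
  have hratio : ‖-q / ((c ^ lam : ℝ) : ℂ)‖ < 1 := by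
    rwa [norm_div, norm_neg, norm_real, Real.norm_of_nonneg hcl.le, div_lt_one hcl]
  have hL := (hasSum_laplaceTransform_mlRelaxation hlam hc hratio).unique
    ((hasSum_geometric_of_norm_lt_one hratio).mul_left _)
  have hc₀ : (c : ℂ) ≠ 0 := ofReal_ne_zero.2 hc.ne'
  have hK : ((c ^ lam : ℝ) : ℂ) ≠ 0 := ofReal_ne_zero.2 hcl.ne'
  have hsum : ((c ^ lam : ℝ) : ℂ) + q ≠ 0 := by
    intro h
    rw [eq_neg_of_add_eq_zero_right h, norm_neg, norm_real, Real.norm_of_nonneg hcl.le] at hq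
    exact lt_irrefl _ hq
  have hfactor : 1 - -q / ((c ^ lam : ℝ) : ℂ) =
      (((c ^ lam : ℝ) : ℂ) + q) / ((c ^ lam : ℝ) : ℂ) := by
    field_simp
    ring
  rw [hL, hfactor]
  field_simp

theorem laplaceTransform_mlRelaxation (hlam : 0 < lam)
    (hf : ∀ s : ℂ, 0 < s.re → LaplaceConvergent (mlRelaxation lam q) s) {s : ℂ} (hs : 0 < s.re) :
    laplaceTransform (mlRelaxation lam q) s * (s * (s ^ (lam : ℂ) + q)) = s ^ (lam : ℂ) := by
  have hopen : IsOpen {z : ℂ | 0 < z.re} := isOpen_lt continuous_const continuous_re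
  have hpow : DifferentiableOn ℂ (fun z : ℂ => z ^ (lam : ℂ)) {z : ℂ | 0 < z.re} := fun z hz =>
    (differentiableAt_id.cpow_const (Or.inl hz)).differentiableWithinAt
  have hL : DifferentiableOn ℂ (laplaceTransform (mlRelaxation lam q)) {z : ℂ | 0 < z.re} := by
    intro z (hz : 0 < z.re)
    have hhalf : ((z.re / 2 : ℝ) : ℂ).re < z.re := by rw [ofReal_re]; linarith
    exact ((hf _ (by rw [ofReal_re]; linarith)).differentiableAt hhalf).differentiableWithinAt
  obtain ⟨c₀, hc₀, hc₀q⟩ : ∃ c₀ : ℝ, 0 < c₀ ∧ ‖q‖ < c₀ ^ lam :=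
    (((Filter.eventually_gt_atTop 0).and
      ((tendsto_rpow_atTop hlam).eventually_gt_atTop ‖q‖))).exists
  have hagree : ∀ᶠ c : ℝ in nhdsWithin c₀ {c₀}ᶜ,
      laplaceTransform (mlRelaxation lam q) c * (c * ((c : ℂ) ^ (lam : ℂ) + q)) =
        (c : ℂ) ^ (lam : ℂ) := by
    refine Filter.Eventually.filter_mono nhdsWithin_le_nhds ?_
    filter_upwards [lt_mem_nhds hc₀,
      (Real.continuousAt_rpow_const c₀ lam (.inl hc₀.ne')).eventually (lt_mem_nhds hc₀q)]
      with c hc hcq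
    simpa only [ofReal_cpow hc.le] using laplaceTransform_mlRelaxation_of_lt hlam hc hcq
  have hofReal : Filter.Tendsto ofReal (nhdsWithin c₀ {c₀}ᶜ) (nhdsWithin (c₀ : ℂ) {(c₀ : ℂ)}ᶜ) :=
    continuous_ofReal.continuousWithinAt.tendsto_nhdsWithin fun _ _ => by simp_all
  exact ((hL.mul (differentiableOn_id.mul (hpow.add_const q))).analyticOnNhd
    hopen).eqOn_of_preconnected_of_frequently_eq (hpow.analyticOnNhd hopen)
    (convex_halfSpace_re_gt 0).isPreconnected (by simpa using hc₀)
    (hofReal.frequently hagree.frequently) hs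

end Relaxation

section ResolventKernel

theorem min_one_mul_one_sub_le_one_sub_rpow {x a : ℝ} (hx₀ : 0 ≤ x) (hx₁ : x ≤ 1) (ha : 0 < a) :
    min a 1 * (1 - x) ≤ 1 - x ^ a := by
  rcases le_total a 1 with h | h
  · have := rpow_one_add_le_one_add_mul_self (s := x - 1) (by linarith) ha.le h
    rw [add_sub_cancel] at this
    rw [min_eq_left h]
    linarith
  · have := Real.rpow_le_rpow_of_exponent_ge_of_imp hx₀ hx₁ h fun _ h₀ => by linarith
    rw [Real.rpow_one] at this
    rw [min_eq_right h]
    linarith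

theorem min_one_mul_abs_sub_mul_max_rpow_le {x y a : ℝ} (hx : 0 < x) (hy : 0 < y) (ha : 0 < a) :
    min a 1 * (|x - y| * max x y ^ (a - 1)) ≤ |x ^ a - y ^ a| := by
  wlog hxy : y ≤ x generalizing x y
  · simpa only [abs_sub_comm, max_comm] using this hy hx (le_of_not_ge hxy)
  calc min a 1 * (|x - y| * max x y ^ (a - 1))
      = x ^ a * (min a 1 * (1 - y / x)) := by
        rw [abs_of_nonneg (sub_nonneg.2 hxy), max_eq_left hxy, Real.rpow_sub_one hx.ne']
        field_simp
    _ ≤ x ^ a * (1 - (y / x) ^ a) := by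
        gcongr
        exact min_one_mul_one_sub_le_one_sub_rpow (by positivity) (by rwa [div_le_one hx]) ha
    _ = x ^ a - y ^ a := by
        rw [Real.div_rpow hy.le hx.le]
        field_simp
    _ ≤ |x ^ a - y ^ a| := le_abs_self _

section Circle

-- The point `c + y * I` has modulus `r`; the line through it parallel to the imaginary axis meets
-- the circle of radius `Y` at the heights `±b`.
variable {lam Y b c r y : ℝ}

theorem mul_one_add_rpow_le_of_abs_le_half (hY : 0 < Y) (hlam : 0 < lam) (hr : 0 ≤ r) (hc : 0 ≤ c)
    (hcY : c ≤ Y / 2) (hb : b ^ 2 + c ^ 2 = Y ^ 2) (hry : r ^ 2 = c ^ 2 + y ^ 2)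
    (hy : |y| ≤ b / 2) :
    Y ^ lam / (10 * (1 + Y) ^ lam) * (|y| * (1 + |y|) ^ lam) ≤
      r * |r - Y| * max r Y ^ (lam - 1) := by
  have hy2 : y ^ 2 ≤ (b / 2) ^ 2 := sq_le_sq' (neg_le_of_abs_le hy) (le_of_abs_le hy)
  have hrY : r ≤ 9 / 10 * Y := abs_le_of_sq_le_sq' (by nlinarith) (by positivity) |>.2
  have hyr : |y| ≤ r := abs_le_of_sq_le_sq (by nlinarith) hr
  calc Y ^ lam / (10 * (1 + Y) ^ lam) * (|y| * (1 + |y|) ^ lam)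
      ≤ Y ^ lam / (10 * (1 + Y) ^ lam) * (|y| * (1 + Y) ^ lam) := by
        gcongr
        linarith
    _ = |y| * (Y / 10) * max r Y ^ (lam - 1) := by
        rw [max_eq_right (by linarith), Real.rpow_sub_one hY.ne']
        field_simp
    _ ≤ r * |r - Y| * max r Y ^ (lam - 1) := by
        rw [abs_sub_comm, abs_of_nonneg (by linarith : 0 ≤ Y - r)]
        gcongr
        linarith

theorem abs_abs_sub_div_three_le (hY : 0 < Y) (hr : 0 ≤ r) (hc : 0 ≤ c) (hcY : c ≤ Y / 2)
    (hb₀ : 0 ≤ b) (hb : b ^ 2 + c ^ 2 = Y ^ 2) (hry : r ^ 2 = c ^ 2 + y ^ 2) :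
    |(|y| - b)| / 3 ≤ |r - Y| := by
  have hbY : Y / 2 ≤ b := abs_le_of_sq_le_sq' (by nlinarith) hb₀ |>.2
  have hrc : r ≤ |y| + c :=
    abs_le_of_sq_le_sq' (by nlinarith [sq_abs y, mul_nonneg (abs_nonneg y) hc]) (by positivity) |>.2
  have hfactor : |r - Y| * (r + Y) = |(|y| - b)| * (|y| + b) := by
    calc |r - Y| * (r + Y) = |(r - Y) * (r + Y)| := by
          rw [abs_mul, abs_of_nonneg (by positivity : 0 ≤ r + Y)]
      _ = |(|y| - b) * (|y| + b)| := by
          congr 1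
          linarith [sq_abs y]
      _ = |(|y| - b)| * (|y| + b) := by
          rw [abs_mul, abs_of_nonneg (by positivity : 0 ≤ |y| + b)]
  refine le_of_mul_le_mul_right ?_ (by positivity : 0 < r + Y)
  rw [hfactor, div_mul_eq_mul_div, mul_div_assoc]
  gcongr
  linarith [abs_nonneg y]

theorem mul_one_add_rpow_le_of_half_le_abs (hY : 0 < Y) (hlam : 0 < lam) (hr : 0 ≤ r) (hc : 0 ≤ c)
    (hcY : c ≤ Y / 2) (hb₀ : 0 ≤ b) (hb : b ^ 2 + c ^ 2 = Y ^ 2) (hry : r ^ 2 = c ^ 2 + y ^ 2)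
    (hy : b / 2 ≤ |y|) :
    1 / (12 * (Y⁻¹ + 2) ^ lam) * (|(|y| - b)| * (1 + |(|y| - b)|) ^ lam) ≤
      r * |r - Y| * max r Y ^ (lam - 1) := by
  have hbY : Y / 2 ≤ b := abs_le_of_sq_le_sq' (by nlinarith) hb₀ |>.2
  have hbY' : b ≤ Y := abs_le_of_sq_le_sq' (by nlinarith) hY.le |>.2
  have hyr : |y| ≤ r := abs_le_of_sq_le_sq (by nlinarith) hr
  have hm : 0 < max r Y := hY.trans_le (le_max_right _ _)
  have hz : 1 + |(|y| - b)| ≤ (Y⁻¹ + 2) * max r Y := by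
    have h₁ : 1 ≤ Y⁻¹ * max r Y := by
      rw [inv_mul_eq_div, one_le_div hY]
      exact le_max_right _ _
    have h₂ : |(|y| - b)| ≤ |y| + b := by
      simpa only [abs_abs, abs_of_nonneg hb₀] using abs_sub |y| b
    linarith [le_max_left r Y, le_max_right r Y]
  calc 1 / (12 * (Y⁻¹ + 2) ^ lam) * (|(|y| - b)| * (1 + |(|y| - b)|) ^ lam)
      ≤ 1 / (12 * (Y⁻¹ + 2) ^ lam) * (|(|y| - b)| * ((Y⁻¹ + 2) * max r Y) ^ lam) := by gcongr
    _ = max r Y / 4 * (|(|y| - b)| / 3) * max r Y ^ (lam - 1) := by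
        rw [Real.mul_rpow (by positivity) hm.le, Real.rpow_sub_one hm.ne']
        field_simp
        ring
    _ ≤ r * |r - Y| * max r Y ^ (lam - 1) := by
        gcongr
        · rw [div_le_iff₀ four_pos]
          exact max_le (by linarith) (by linarith)
        · exact abs_abs_sub_div_three_le hY hr hc hcY hb₀ hb hry

end Circle

/-- The function `z ↦ (|z| (1 + |z|) ^ lam) ^ (-β)`, an integrable model for the singularity at `0`
and the decay at infinity of `β`-th powers of resolvents. -/
noncomputable def resolventKernel (lam β z : ℝ) : ℝ :=
  (|z| * (1 + |z|) ^ lam) ^ (-β)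

theorem resolventKernel_nonneg (lam β z : ℝ) : 0 ≤ resolventKernel lam β z := by
  unfold resolventKernel
  positivity

theorem resolventKernel_neg (lam β z : ℝ) :
    resolventKernel lam β (-z) = resolventKernel lam β z := by
  rw [resolventKernel, abs_neg, resolventKernel]

theorem resolventKernel_le_of_eq_or_eq (lam β : ℝ) {b y z : ℝ} (hz : z = y ∨ z = |y| - b) :
    resolventKernel lam β z ≤ resolventKernel lam β y + resolventKernel lam β (y - b) +
      resolventKernel lam β (y + b) := by
  have hnn := resolventKernel_nonneg lam β
  rcases hz with rfl | rfl
  · linarith [hnn (z - b), hnn (z + b)]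
  · rcases abs_cases y with ⟨h, -⟩ | ⟨h, -⟩ <;> rw [h]
    · linarith [hnn y, hnn (y + b)]
    · rw [← neg_add', resolventKernel_neg]
      linarith [hnn y, hnn (y - b)]

theorem resolventKernel_le {lam β : ℝ} (hlam : 0 < lam) (hβ : 0 < β) (z : ℝ) :
    resolventKernel lam β z ≤
      (Icc (-1) 1).indicator (fun z => |z| ^ (-β)) z +
        2 ^ β * (1 + ‖z‖) ^ (-(β * (1 + lam))) := by
  have htail : 0 ≤ 2 ^ β * (1 + ‖z‖) ^ (-(β * (1 + lam))) := by positivity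
  rw [resolventKernel, Real.mul_rpow (abs_nonneg z) (by positivity),
    ← Real.rpow_mul (by positivity)]
  by_cases hz : z ∈ Icc (-1) 1
  · rw [indicator_of_mem hz]
    have hdecay : (1 + |z|) ^ (lam * -β) ≤ 1 :=
      Real.rpow_le_one_of_one_le_of_nonpos (by linarith [abs_nonneg z]) (by nlinarith)
    have := mul_le_of_le_one_right (Real.rpow_nonneg (abs_nonneg z) (-β)) hdecay
    linarith
  · rw [indicator_of_notMem hz, zero_add, Real.norm_eq_abs]
    have hz1 : 1 < |z| := not_le.1 fun h => hz (abs_le.1 h)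
    calc |z| ^ (-β) * (1 + |z|) ^ (lam * -β)
        ≤ ((1 + |z|) / 2) ^ (-β) * (1 + |z|) ^ (lam * -β) := by
          gcongr ?_ * _
          exact Real.rpow_le_rpow_of_nonpos (by positivity) (by linarith) (by linarith)
      _ = 2 ^ β * (1 + |z|) ^ (-(β * (1 + lam))) := by
          rw [Real.div_rpow (by positivity) zero_le_two, Real.rpow_neg zero_le_two, div_inv_eq_mul,
            mul_right_comm, ← Real.rpow_add (by positivity), mul_comm]
          ring_nf

theorem intervalIntegrable_abs_rpow {a : ℝ} (ha : -1 < a) :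
    IntervalIntegrable (fun z : ℝ => |z| ^ a) volume (-1) 1 := by
  have hpos : IntervalIntegrable (fun z : ℝ => |z| ^ a) volume 0 1 :=
    (intervalIntegral.intervalIntegrable_rpow' ha).congr fun z hz => by
      rw [uIoc_of_le zero_le_one] at hz
      simp only [abs_of_pos hz.1]
  have hneg : IntervalIntegrable (fun z : ℝ => |z| ^ a) volume 0 (-1) := by
    simpa only [neg_zero, abs_neg] using (IntervalIntegrable.iff_comp_neg (by simp)).1 hpos
  exact hneg.symm.trans hpos

theorem integrable_resolventKernel {lam β : ℝ} (hlam : 0 < lam) (hβ₁ : β < 1)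
    (hβ : 1 < β * (1 + lam)) : Integrable (resolventKernel lam β) := by
  have hβ₀ : 0 < β := (pos_iff_pos_of_mul_pos (one_pos.trans hβ)).2 (by positivity)
  have hlocal : Integrable ((Icc (-1 : ℝ) 1).indicator fun z => |z| ^ (-β)) := by
    rw [integrable_indicator_iff measurableSet_Icc, integrableOn_Icc_iff_integrableOn_Ioc,
      ← intervalIntegrable_iff_integrableOn_Ioc_of_le (by norm_num)]
    exact intervalIntegrable_abs_rpow (by linarith)
  have htail : Integrable fun z : ℝ => (1 + ‖z‖) ^ (-(β * (1 + lam))) :=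
    integrable_one_add_norm (by simpa using hβ)
  refine (hlocal.add (htail.const_mul (2 ^ β))).mono' ?_ (.of_forall fun z => ?_)
  · exact Measurable.aestronglyMeasurable (by unfold resolventKernel; fun_prop)
  · rw [Real.norm_of_nonneg (resolventKernel_nonneg lam β z)]
    exact resolventKernel_le hlam hβ₀ z

theorem exists_mul_le_norm_mul_abs_norm_rpow_sub {lam Y : ℝ} (hlam : 0 < lam) (hY : 0 < Y) :
    ∃ k > 0, ∀ b c y : ℝ, 0 ≤ b → 0 ≤ c → c ≤ Y / 2 → b ^ 2 + c ^ 2 = Y ^ 2 → y ≠ 0 →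
      ∃ z, (z = y ∨ z = |y| - b) ∧ k * (|z| * (1 + |z|) ^ lam) ≤
        ‖(c + y * I : ℂ)‖ * |‖(c + y * I : ℂ)‖ ^ lam - Y ^ lam| := by
  set k₁ := Y ^ lam / (10 * (1 + Y) ^ lam)
  set k₂ := 1 / (12 * (Y⁻¹ + 2) ^ lam)
  have : 0 < min k₁ k₂ := lt_min (by positivity) (by positivity)
  have : 0 < min lam 1 := lt_min hlam one_pos
  refine ⟨min lam 1 * min k₁ k₂, by positivity, fun b c y hb₀ hc hcY hb hy => ?_⟩
  have hry : ‖(c + y * I : ℂ)‖ ^ 2 = c ^ 2 + y ^ 2 := by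
    rw [Complex.sq_norm, normSq_add_mul_I]
  set r := ‖(c + y * I : ℂ)‖
  have hr : 0 ≤ r := norm_nonneg _
  have hr' : 0 < r := by
    refine lt_of_pow_lt_pow_left₀ 2 hr ?_
    rw [hry, zero_pow two_ne_zero]
    positivity
  have hpow : min lam 1 * (r * |r - Y| * max r Y ^ (lam - 1)) ≤ r * |r ^ lam - Y ^ lam| := by
    have := mul_le_mul_of_nonneg_left (min_one_mul_abs_sub_mul_max_rpow_le hr' hY hlam) hr
    linarith
  suffices ∃ z, (z = y ∨ z = |y| - b) ∧
      min k₁ k₂ * (|z| * (1 + |z|) ^ lam) ≤ r * |r - Y| * max r Y ^ (lam - 1) by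
    obtain ⟨z, hz, hle⟩ := this
    refine ⟨z, hz, le_trans ?_ hpow⟩
    rw [mul_assoc]
    gcongr
  rcases le_total |y| (b / 2) with hsmall | hlarge
  · refine ⟨y, .inl rfl,
      le_trans ?_ (mul_one_add_rpow_le_of_abs_le_half hY hlam hr hc hcY hb hry hsmall)⟩
    gcongr
    exact min_le_left _ _
  · refine ⟨|y| - b, .inr rfl,
      le_trans ?_ (mul_one_add_rpow_le_of_half_le_abs hY hlam hr hc hcY hb₀ hb hry hlarge)⟩
    gcongr
    exact min_le_right _ _

theorem exists_integral_le_and_rpow_neg_le {lam β Y : ℝ} (hlam : 0 < lam) (hY : 0 < Y)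
    (hβ₁ : β < 1) (hβ : 1 < β * (1 + lam)) :
    ∃ K, ∀ c, 0 ≤ c → c ≤ Y / 2 → ∃ H : ℝ → ℝ, Integrable H ∧ ∫ y, H y ≤ K ∧
      ∀ᵐ y : ℝ, ‖(c + y * I : ℂ)‖ ≠ 0 ∧ |‖(c + y * I : ℂ)‖ ^ lam - Y ^ lam| ≠ 0 ∧
        (‖(c + y * I : ℂ)‖ * |‖(c + y * I : ℂ)‖ ^ lam - Y ^ lam|) ^ (-β) ≤ H y := by
  have hβ₀ : 0 < β := (pos_iff_pos_of_mul_pos (one_pos.trans hβ)).2 (by positivity)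
  obtain ⟨k, hk, hle⟩ := exists_mul_le_norm_mul_abs_norm_rpow_sub hlam hY
  set w := resolventKernel lam β
  have hw : Integrable w := integrable_resolventKernel hlam hβ₁ hβ
  refine ⟨k ^ (-β) * (3 * ∫ z, w z), fun c hc hcY => ?_⟩
  set b := √(Y ^ 2 - c ^ 2)
  have hb : b ^ 2 + c ^ 2 = Y ^ 2 := by
    rw [Real.sq_sqrt (by nlinarith), sub_add_cancel]
  refine ⟨fun y => k ^ (-β) * (w y + w (y - b) + w (y + b)),
    ((hw.add (hw.comp_sub_right b)).add (hw.comp_add_right b)).const_mul _, ?_, ?_⟩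
  · have hsum : ∫ y, (w y + w (y - b) + w (y + b)) = 3 * ∫ z, w z := by
      rw [integral_add (f := fun y => w y + w (y - b)) (hw.add (hw.comp_sub_right b))
        (hw.comp_add_right b), integral_add hw (hw.comp_sub_right b), integral_sub_right_eq_self,
        integral_add_right_eq_self]
      ring
    rw [integral_const_mul, hsum]
  · filter_upwards [volume.ae_ne 0, volume.ae_ne b, volume.ae_ne (-b)] with y hy₀ hyb hyb'
    obtain ⟨z, hz, hzle⟩ := hle b c y (Real.sqrt_nonneg _) hc hcY hb hy₀
    have hz₀ : z ≠ 0 := by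
      rcases hz with rfl | rfl
      · exact hy₀
      · intro h
        rcases eq_or_eq_neg_of_abs_eq (sub_eq_zero.1 h) with h | h <;> contradiction
    have hpos := (mul_pos hk (by positivity : 0 < |z| * (1 + |z|) ^ lam)).trans_le hzle
    refine ⟨fun h => by simp [h] at hpos, fun h => by simp [h] at hpos, ?_⟩
    refine (Real.rpow_le_rpow_of_nonpos (by positivity) hzle (by linarith)).trans ?_
    rw [Real.mul_rpow hk.le (by positivity)]
    gcongr
    exact resolventKernel_le_of_eq_or_eq lam β hz

end ResolventKernel

section Growth

theorem le_rpow_mul_rpow_mul_rpow_neg {x a b d ε : ℝ} (hx : 0 ≤ x) (hd : 0 < d) (hε₀ : 0 ≤ ε)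
    (hε₁ : ε ≤ 1) (hxa : x ≤ a) (hxd : x * d ≤ b) :
    x ≤ a ^ ε * (b ^ (1 - ε) * d ^ (-(1 - ε))) := by
  have hε : 0 ≤ 1 - ε := sub_nonneg.2 hε₁
  calc x = x ^ ε * x ^ (1 - ε) := by
        rw [← Real.rpow_add_of_nonneg hx hε₀ hε, add_sub_cancel, Real.rpow_one]
    _ ≤ a ^ ε * (b / d) ^ (1 - ε) := by
        have hxd' : x ≤ b / d := (le_div_iff₀ hd).2 hxd
        have ha : 0 ≤ a := hx.trans hxa
        gcongr
    _ = a ^ ε * (b ^ (1 - ε) * d ^ (-(1 - ε))) := by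
        rw [Real.div_rpow ((mul_nonneg hx hd.le).trans hxd) hd.le, Real.rpow_neg hd.le,
          div_eq_mul_inv]

theorem exists_pos_mul_le_and_mul_one_add_lt {lam κ : ℝ} (hlam : 0 < lam) (hκ : 0 < κ) (N : ℕ) :
    ∃ ε : ℝ, 0 < ε ∧ N * ε ≤ κ ∧ ε * (1 + lam) < lam := by
  refine ⟨min (κ / (N + 1)) (lam / (2 * (1 + lam))), by positivity, ?_, ?_⟩
  · calc N * min (κ / (N + 1)) (lam / (2 * (1 + lam))) ≤ (N + 1) * (κ / (N + 1)) := by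
          gcongr
          · linarith
          · exact min_le_left _ _
      _ = κ := by field_simp
  · calc min (κ / (N + 1)) (lam / (2 * (1 + lam))) * (1 + lam)
        ≤ lam / (2 * (1 + lam)) * (1 + lam) := by
          gcongr
          exact min_le_right _ _
      _ = lam / 2 := by field_simp
      _ < lam := half_lt_self hlam

theorem integrableOn_inv_pow_mul_norm_sub_const {E : Type*} [NormedAddCommGroup E] {f : ℝ → E}
    {N : ℕ} (hfc : Continuous f) (a : E)
    (hf : IntegrableOn (fun t => ((1 + t) ^ N)⁻¹ * ‖f t‖) (Ioi 0)) :
    IntegrableOn (fun t => ((1 + t) ^ (N + 2))⁻¹ * ‖f t - a‖) (Ioi 0) := by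
  refine (hf.add (integrable_inv_one_add_sq.integrableOn.const_mul ‖a‖)).mono'
    (AEStronglyMeasurable.mul (Measurable.aestronglyMeasurable (by fun_prop))
      (hfc.sub continuous_const).norm.aestronglyMeasurable) ?_
  filter_upwards [ae_restrict_mem measurableSet_Ioi] with t (ht : 0 < t)
  have hN : 1 ≤ (1 + t) ^ N := one_le_pow₀ (by linarith)
  rw [Real.norm_of_nonneg (by positivity)]
  calc ((1 + t) ^ (N + 2))⁻¹ * ‖f t - a‖ ≤ ((1 + t) ^ (N + 2))⁻¹ * (‖f t‖ + ‖a‖) := by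
        gcongr
        exact norm_sub_le _ _
    _ = ((1 + t) ^ (N + 2))⁻¹ * ‖f t‖ + ‖a‖ * ((1 + t) ^ (N + 2))⁻¹ := by ring
    _ ≤ ((1 + t) ^ N)⁻¹ * ‖f t‖ + ‖a‖ * (1 + t ^ 2)⁻¹ := by
        gcongr
        · linarith
        · linarith
        · nlinarith [pow_add (1 + t) N 2]

variable {E : Type*} [NormedAddCommGroup E] [NormedSpace ℂ E] {f : ℝ → E} {lam κ : ℝ} {N : ℕ}

theorem exists_norm_laplaceTransform_le_mul_rpow_neg
    (hf : IntegrableOn (fun t => ((1 + t) ^ N)⁻¹ * ‖f t‖) (Ioi 0)) :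
    ∃ B, 0 ≤ B ∧ ∀ s : ℂ, 0 < s.re → s.re ≤ 1 →
      ‖laplaceTransform f s‖ ≤ B * s.re ^ (-N : ℝ) := by
  set J := ∫ t in Ioi (0 : ℝ), ((1 + t) ^ N)⁻¹ * ‖f t‖
  have hJ : 0 ≤ J := setIntegral_nonneg measurableSet_Ioi fun t (ht : 0 < t) => by positivity
  refine ⟨Real.exp 1 * N.factorial * J, by positivity, fun s hs hs₁ => ?_⟩
  calc ‖laplaceTransform f s‖ ≤ Real.exp s.re * N.factorial / s.re ^ N * J :=
        norm_laplaceTransform_le hf hs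
    _ ≤ Real.exp 1 * N.factorial / s.re ^ N * J := by gcongr
    _ = Real.exp 1 * N.factorial * J * s.re ^ (-N : ℝ) := by
        rw [Real.rpow_neg hs.le, Real.rpow_natCast]
        ring

theorem exists_integral_le_and_norm_laplaceTransform_le {A Y : ℝ} (hlam : 0 < lam) (hY : 0 < Y)
    (hκ : 0 < κ) (hf : IntegrableOn (fun t => ((1 + t) ^ N)⁻¹ * ‖f t‖) (Ioi 0))
    (hA : ∀ s : ℂ, 0 < s.re → ‖laplaceTransform f s‖ * (‖s‖ * |‖s‖ ^ lam - Y ^ lam|) ≤ A) :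
    ∃ K, ∀ c, 0 < c → c ≤ 1 → c ≤ Y / 2 → ∃ H : ℝ → ℝ, Integrable H ∧
      ∫ y, H y ≤ K * c ^ (-κ) ∧ ∀ᵐ y : ℝ, ‖laplaceTransform f (c + y * I)‖ ≤ H y := by
  obtain ⟨ε, hε₀, hεκ, hεlam⟩ := exists_pos_mul_le_and_mul_one_add_lt hlam hκ N
  have hε₁ : ε < 1 := by nlinarith
  obtain ⟨K, hK⟩ := exists_integral_le_and_rpow_neg_le (β := 1 - ε) hlam hY (by linarith)
    (by linarith)
  obtain ⟨B, hB, hLB⟩ := exists_norm_laplaceTransform_le_mul_rpow_neg hf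
  refine ⟨B ^ ε * A ^ (1 - ε) * K, fun c hc hc₁ hcY => ?_⟩
  obtain ⟨H, hH, hHK, hle⟩ := hK c hc.le hcY
  have hA₀ : 0 ≤ A := le_trans (by positivity) (hA 1 (by simp))
  refine ⟨fun y => B ^ ε * c ^ (-κ) * (A ^ (1 - ε) * H y), (hH.const_mul _).const_mul _, ?_, ?_⟩
  · rw [integral_const_mul, integral_const_mul]
    calc B ^ ε * c ^ (-κ) * (A ^ (1 - ε) * ∫ y, H y)
        ≤ B ^ ε * c ^ (-κ) * (A ^ (1 - ε) * K) := by gcongr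
      _ = B ^ ε * A ^ (1 - ε) * K * c ^ (-κ) := by ring
  · filter_upwards [hle] with y ⟨hs, hd, hy⟩
    have hre : (c + y * I : ℂ).re = c := by simp
    have hbound := hLB (c + y * I) (by rwa [hre]) (by rwa [hre])
    rw [hre] at hbound
    calc ‖laplaceTransform f (c + y * I)‖ ≤ _ :=
          le_rpow_mul_rpow_mul_rpow_neg (norm_nonneg _) (by positivity) hε₀.le hε₁.le hbound
            (hA _ (by rwa [hre]))
      _ ≤ (B * c ^ (-N : ℝ)) ^ ε * (A ^ (1 - ε) * H y) := by gcongr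
      _ ≤ B ^ ε * c ^ (-κ) * (A ^ (1 - ε) * H y) := by
        have hH₀ : 0 ≤ H y := le_trans (by positivity) hy
        rw [Real.mul_rpow hB (by positivity), ← Real.rpow_mul hc.le]
        gcongr ?_ * ?_ * _
        exact Real.rpow_le_rpow_of_exponent_ge hc hc₁ (by linarith)

theorem exists_norm_le_of_norm_laplaceTransform_mul_le [CompleteSpace E] {A Y : ℝ}
    (hlam : 0 < lam) (hY : 0 < Y) (hκ : 0 < κ) (hfc : Continuous f)
    (hf : IntegrableOn (fun t => ((1 + t) ^ N)⁻¹ * ‖f t‖) (Ioi 0))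
    (hA : ∀ s : ℂ, 0 < s.re → ‖laplaceTransform f s‖ * (‖s‖ * |‖s‖ ^ lam - Y ^ lam|) ≤ A) :
    ∃ C, ∀ t, 1 ≤ t → ‖f t‖ ≤ C * t ^ κ := by
  obtain ⟨K, hK⟩ := exists_integral_le_and_norm_laplaceTransform_le hlam hY hκ hf hA
  set c₀ := min 1 (Y / 2)
  have hc₀ : 0 < c₀ := by positivity
  refine ⟨Real.exp c₀ / (2 * Real.pi) * (K * c₀ ^ (-κ)), fun t ht => ?_⟩
  have ht₀ : 0 < t := one_pos.trans_le ht
  have hc : 0 < c₀ / t := by positivity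
  have hct : c₀ / t ≤ c₀ := div_le_self hc₀.le ht
  obtain ⟨H, hH, hHK, hle⟩ := hK (c₀ / t) hc (hct.trans (min_le_left _ _))
    (hct.trans (min_le_right _ _))
  have hconv : LaplaceConvergent f ((c₀ / t : ℝ) : ℂ) :=
    laplaceConvergent_of_integrableOn_inv_pow hfc.aestronglyMeasurable hf (by simpa using hc)
  calc ‖f t‖ ≤ Real.exp (c₀ / t * t) / (2 * Real.pi) * ∫ y, H y :=
        norm_le_integral_of_norm_laplaceTransform_le ht₀ hconv hfc.continuousAt hH hle
    _ ≤ Real.exp (c₀ / t * t) / (2 * Real.pi) * (K * (c₀ / t) ^ (-κ)) := by gcongr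
    _ = Real.exp c₀ / (2 * Real.pi) * (K * c₀ ^ (-κ)) * t ^ κ := by
        rw [div_mul_cancel₀ _ ht₀.ne', Real.div_rpow hc₀.le ht₀.le, Real.rpow_neg ht₀.le,
          div_inv_eq_mul]
        ring

variable {q : ℂ}

theorem norm_laplaceTransform_mlRelaxation_sub_one_mul_le (hlam : 0 < lam)
    (hf : ∀ s : ℂ, 0 < s.re → LaplaceConvergent (mlRelaxation lam q) s) {s : ℂ} (hs : 0 < s.re) :
    ‖laplaceTransform (fun t => mlRelaxation lam q t - 1) s‖ *
      (‖s‖ * |‖s‖ ^ lam - ‖q‖|) ≤ ‖q‖ := by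
  have hs₀ : s ≠ 0 := by
    rintro rfl
    exact lt_irrefl _ hs
  have heq : laplaceTransform (fun t => mlRelaxation lam q t - 1) s * (s * (s ^ (lam : ℂ) + q)) =
      -q := by
    rw [laplaceTransform_sub (hf s hs) (laplaceConvergent_const hs 1), sub_mul,
      laplaceTransform_mlRelaxation hlam hf hs, laplaceTransform_const hs]
    field_simp
    ring
  calc _ ≤ ‖laplaceTransform (fun t => mlRelaxation lam q t - 1) s‖ *
        (‖s‖ * ‖s ^ (lam : ℂ) + q‖) := by
        gcongr
        simpa only [norm_cpow_real, norm_neg, sub_neg_eq_add] using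
          abs_norm_sub_norm_le (s ^ (lam : ℂ)) (-q)
    _ = ‖q‖ := by rw [← norm_mul, ← norm_mul, heq, norm_neg]

theorem exists_norm_mlRelaxation_le (hlam : 0 < lam) (hκ : 0 < κ)
    (hf : IntegrableOn (fun t => ((1 + t) ^ N)⁻¹ * ‖mlRelaxation lam q t‖) (Ioi 0)) :
    ∃ C, ∀ t, 1 ≤ t → ‖mlRelaxation lam q t‖ ≤ C * t ^ κ := by
  rcases eq_or_ne q 0 with rfl | hq
  · refine ⟨‖mlE lam 0‖, fun t ht => ?_⟩
    rw [mlRelaxation, neg_zero, zero_mul]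
    exact le_mul_of_one_le_right (norm_nonneg _) (Real.one_le_rpow ht hκ.le)
  have hcont := continuous_mlRelaxation hlam q
  have hY : (‖q‖ ^ lam⁻¹) ^ lam = ‖q‖ := Real.rpow_inv_rpow (norm_nonneg q) hlam.ne'
  obtain ⟨C, hC⟩ := exists_norm_le_of_norm_laplaceTransform_mul_le hlam
    (Real.rpow_pos_of_pos (norm_pos_iff.2 hq) lam⁻¹) hκ (hcont.sub continuous_const)
    (integrableOn_inv_pow_mul_norm_sub_const hcont 1 hf) (fun s hs => by
      rw [hY]
      exact norm_laplaceTransform_mlRelaxation_sub_one_mul_le hlam (fun z hz =>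
        laplaceConvergent_of_integrableOn_inv_pow hcont.aestronglyMeasurable hf hz) hs)
  refine ⟨C + 1, fun t ht => ?_⟩
  calc ‖mlRelaxation lam q t‖ ≤ ‖mlRelaxation lam q t - 1‖ + ‖(1 : ℂ)‖ := norm_le_norm_sub_add _ _
    _ ≤ C * t ^ κ + t ^ κ := by
        rw [norm_one]
        exact add_le_add (hC t ht) (Real.one_le_rpow ht hκ.le)
    _ = (C + 1) * t ^ κ := by ring

end Growth

section BetaFactor

theorem eqOn_zero_or_exists_eventually_mul_norm_pow_le {𝕜 E : Type*} [NontriviallyNormedField 𝕜]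
    [NormedAddCommGroup E] [NormedSpace 𝕜 E] {f : 𝕜 → E} {U : Set 𝕜} {x₀ : 𝕜}
    (hf : AnalyticOnNhd 𝕜 f U) (hU : IsPreconnected U) (hx₀ : x₀ ∈ U) :
    EqOn f 0 U ∨ ∃ (n : ℕ) (m : ℝ), 0 < m ∧ ∀ᶠ x in nhds x₀, m * ‖x - x₀‖ ^ n ≤ ‖f x‖ := by
  by_cases hzero : ∀ᶠ x in nhds x₀, f x = 0
  · exact .inl (hf.eqOn_zero_of_preconnected_of_eventuallyEq_zero hU hx₀ hzero)
  obtain ⟨n, g, hg, hg₀, hfg⟩ := (hf x₀ hx₀).exists_eventuallyEq_pow_smul_nonzero_iff.2 hzero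
  have hg₀' : 0 < ‖g x₀‖ := norm_pos_iff.2 hg₀
  refine .inr ⟨n, ‖g x₀‖ / 2, half_pos hg₀', ?_⟩
  filter_upwards [hfg, hg.continuousAt.norm.eventually (lt_mem_nhds (half_lt_self hg₀'))]
    with x hx hgx
  rw [hx, norm_smul, norm_pow, mul_comm]
  gcongr

theorem integrableOn_Ioo_comp_one_sub {E : Type*} [NormedAddCommGroup E] {f : ℝ → E}
    (hf : IntegrableOn f (Ioo 0 1)) : IntegrableOn (fun t => f (1 - t)) (Ioo 0 1) := by
  rw [← intervalIntegrable_iff_integrableOn_Ioo_of_le zero_le_one] at hf ⊢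
  simpa only [sub_zero, sub_self] using (hf.comp_sub_left 1).symm

theorem integrableOn_Ioi_rpow_smul_comp_rpow {E : Type*} [NormedAddCommGroup E] [NormedSpace ℝ E]
    {f : ℝ → E} {u₀ P : ℝ} (hu₀ : 0 < u₀) (hP : P < 0) (hf : IntegrableOn f (Ioo 0 u₀)) :
    IntegrableOn (fun t => t ^ (P - 1) • f (t ^ P)) (Ioi (u₀ ^ P⁻¹)) := by
  have hind : IntegrableOn ((Ioo 0 u₀).indicator f) (Ioi 0) :=
    ((integrable_indicator_iff measurableSet_Ioo).2 hf).integrableOn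
  have hT : 0 < u₀ ^ P⁻¹ := Real.rpow_pos_of_pos hu₀ _
  refine (((integrableOn_Ioi_comp_rpow_iff' _ hP.ne).2 hind).mono_set
    (Ioi_subset_Ioi hT.le)).congr_fun (fun t (ht : _ < t) => ?_) measurableSet_Ioi
  have htP : t ^ P < u₀ := by
    simpa only [Real.rpow_inv_rpow hu₀.le hP.ne] using Real.rpow_lt_rpow_of_neg hT ht hP
  simp only [indicator_of_mem (show t ^ P ∈ Ioo 0 u₀ from
    ⟨Real.rpow_pos_of_pos (hT.trans ht) P, htP⟩)]

/-- One half of the integrand of the extended beta function: `t ^ a * E_λ(-p / t ^ σ)`, so that the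
integrand is the product of the values of two such functions at `t` and at `1 - t`. -/
noncomputable def betaFactor (lam sig : ℝ) (p a : ℂ) (t : ℝ) : ℂ :=
  (t : ℂ) ^ a * mlE lam (-p / (t : ℂ) ^ (sig : ℂ))

variable {lam sig tau : ℝ} {p q a : ℂ} {t : ℝ}

theorem betaFactor_add (b : ℂ) (ht : 0 < t) :
    betaFactor lam sig p (a + b) t = (t : ℂ) ^ a * betaFactor lam sig p b t := by
  rw [betaFactor, betaFactor, cpow_add _ _ (ofReal_ne_zero.2 ht.ne'), mul_assoc]

theorem norm_betaFactor (ht : 0 < t) :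
    ‖betaFactor lam sig p a t‖ = t ^ a.re * ‖betaFactor lam sig p 0 t‖ := by
  rw [← norm_cpow_eq_rpow_re_of_pos ht, ← norm_mul, ← betaFactor_add _ ht, add_zero]

theorem betaFactor_zero_eq_mlRelaxation (hlam : 0 < lam) (ht : 0 < t) :
    betaFactor lam tau q 0 t = mlRelaxation lam q (t ^ (-(tau / lam))) := by
  have hpow : (t ^ (-(tau / lam))) ^ lam = (t ^ tau)⁻¹ := by
    rw [← Real.rpow_mul ht.le, ← Real.rpow_neg ht.le, neg_mul, div_mul_cancel₀ _ hlam.ne']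
  rw [betaFactor, mlRelaxation, cpow_zero, one_mul, hpow, ofReal_inv, ofReal_cpow ht.le,
    div_eq_mul_inv]

theorem analyticOnNhd_betaFactor (hlam : 0 < lam) :
    AnalyticOnNhd ℝ (betaFactor lam sig p a) (Ioi 0) := by
  have hdiff : DifferentiableOn ℂ (fun z : ℂ => z ^ a * mlE lam (-p / z ^ (sig : ℂ)))
      slitPlane := by
    have hpow (b : ℂ) : DifferentiableOn ℂ (fun z : ℂ => z ^ b) slitPlane := fun z hz =>
      (differentiableAt_id.cpow_const hz).differentiableWithinAt
    refine (hpow a).mul ((differentiable_mlE hlam).comp_differentiableOn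
      ((differentiableOn_const _).div (hpow sig) fun z hz => ?_))
    exact cpow_ne_zero_iff.2 (.inl (slitPlane_ne_zero hz))
  intro t ht
  exact ((hdiff.analyticOnNhd isOpen_slitPlane _ (ofReal_mem_slitPlane.2 ht)).restrictScalars).comp
    (ofRealCLM.analyticAt t)

theorem continuousOn_betaFactor (hlam : 0 < lam) :
    ContinuousOn (betaFactor lam sig p a) (Ioi 0) :=
  (analyticOnNhd_betaFactor hlam).continuousOn

theorem continuousOn_betaFactor_one_sub (hlam : 0 < lam) :
    ContinuousOn (fun t => betaFactor lam sig p a (1 - t)) (Iio 1) :=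
  (continuousOn_betaFactor hlam).comp (by fun_prop) fun _ ht => sub_pos.2 (mem_Iio.1 ht)

theorem integrableOn_inv_pow_mul_norm_mlRelaxation (hlam : 0 < lam) (htau : 0 < tau) {M : ℕ}
    {u₀ : ℝ} (hu₀ : 0 < u₀)
    (hM : IntegrableOn (fun u => u ^ M * ‖betaFactor lam tau q 0 u‖) (Ioo 0 u₀)) :
    ∃ N : ℕ, IntegrableOn (fun t => ((1 + t) ^ N)⁻¹ * ‖mlRelaxation lam q t‖) (Ioi 0) := by
  set P := -(lam / tau) with hP
  have hP₀ : P < 0 := neg_neg_of_pos (by positivity)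
  have hsub := integrableOn_Ioi_rpow_smul_comp_rpow hu₀ hP₀ hM
  set T := u₀ ^ P⁻¹
  have hT : 0 < T := Real.rpow_pos_of_pos hu₀ _
  obtain ⟨N, hN⟩ := exists_nat_ge (-(P - 1 + P * M))
  have hcont : ContinuousOn (fun t => ((1 + t) ^ N)⁻¹ * ‖mlRelaxation lam q t‖) (Ici 0) :=
    (ContinuousOn.inv₀ (by fun_prop) fun t (ht : 0 ≤ t) => by positivity).mul
      (continuous_mlRelaxation hlam q).norm.continuousOn
  refine ⟨N, ?_⟩
  rw [← Ioc_union_Ioi_eq_Ioi hT.le]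
  refine ((hcont.mono Icc_subset_Ici_self).integrableOn_Icc.mono_set Ioc_subset_Icc_self).union
    (hsub.mono' ((hcont.mono (Ioi_subset_Ici hT.le)).aestronglyMeasurable measurableSet_Ioi) ?_)
  filter_upwards [ae_restrict_mem measurableSet_Ioi] with t (ht : T < t)
  have ht₀ : 0 < t := hT.trans ht
  have hexp : P - 1 + P * M ≤ 0 := by nlinarith [(Nat.cast_nonneg M : (0 : ℝ) ≤ M)]
  have hPinv : P * -(tau / lam) = 1 := by
    rw [hP]
    field_simp
  calc ‖((1 + t) ^ N)⁻¹ * ‖mlRelaxation lam q t‖‖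
      = (1 + t) ^ (-N : ℝ) * ‖mlRelaxation lam q t‖ := by
        rw [Real.norm_of_nonneg (by positivity), Real.rpow_neg (by positivity), Real.rpow_natCast]
    _ ≤ t ^ (P - 1 + P * M) * ‖mlRelaxation lam q t‖ := by
        gcongr
        calc (1 + t) ^ (-N : ℝ) ≤ (1 + t) ^ (P - 1 + P * M) :=
              Real.rpow_le_rpow_of_exponent_le (by linarith) (by linarith)
          _ ≤ t ^ (P - 1 + P * M) := Real.rpow_le_rpow_of_nonpos ht₀ (by linarith) hexp
    _ = t ^ (P - 1) • ((t ^ P) ^ M * ‖betaFactor lam tau q 0 (t ^ P)‖) := by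
        rw [betaFactor_zero_eq_mlRelaxation hlam (Real.rpow_pos_of_pos ht₀ P),
          ← Real.rpow_mul ht₀.le P (-(tau / lam)), hPinv, Real.rpow_one, Real.rpow_add ht₀,
          Real.rpow_mul ht₀.le, Real.rpow_natCast, smul_eq_mul, mul_assoc]

theorem exists_norm_betaFactor_le (hlam : 0 < lam) (htau : 0 < tau) {M : ℕ} {u₀ κ : ℝ}
    (hu₀ : 0 < u₀) (hκ : 0 < κ)
    (hM : IntegrableOn (fun u => u ^ M * ‖betaFactor lam tau q 0 u‖) (Ioo 0 u₀)) :
    ∃ C, ∀ u ∈ Ioo (0 : ℝ) 1, ‖betaFactor lam tau q 0 u‖ ≤ C * u ^ (-κ) := by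
  obtain ⟨N, hN⟩ := integrableOn_inv_pow_mul_norm_mlRelaxation hlam htau hu₀ hM
  obtain ⟨C, hC⟩ := exists_norm_mlRelaxation_le hlam (by positivity : 0 < κ * (lam / tau)) hN
  refine ⟨C, fun u hu => ?_⟩
  have hexp : -(tau / lam) * (κ * (lam / tau)) = -κ := by field_simp
  rw [betaFactor_zero_eq_mlRelaxation hlam hu.1, ← hexp, Real.rpow_mul hu.1.le]
  exact hC _ (Real.one_le_rpow_of_pos_of_le_one_of_nonpos hu.1 hu.2.le
    (neg_nonpos.2 (by positivity)))

theorem integrableOn_rpow_neg_mul_norm_betaFactor (hlam : 0 < lam) (htau : 0 < tau) {M : ℕ}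
    {u₀ r : ℝ} (hu₀ : 0 < u₀) (hr : r < 1)
    (hM : IntegrableOn (fun u => u ^ M * ‖betaFactor lam tau q 0 u‖) (Ioo 0 u₀)) :
    IntegrableOn (fun u => u ^ (-r) * ‖betaFactor lam tau q 0 u‖) (Ioo 0 1) := by
  obtain ⟨C, hC⟩ := exists_norm_betaFactor_le hlam htau hu₀
    (by linarith : 0 < (1 - r) / 2) hM
  have hpow : IntegrableOn (fun u : ℝ => u ^ (-((1 + r) / 2))) (Ioo 0 1) :=
    (intervalIntegral.integrableOn_Ioo_rpow_iff one_pos).2 (by linarith)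
  have hcont : ContinuousOn (fun u => u ^ (-r) * ‖betaFactor lam tau q 0 u‖) (Ioo 0 1) :=
    (continuousOn_id.rpow_const fun u hu => .inl hu.1.ne').mul
      ((continuousOn_betaFactor hlam).mono Ioo_subset_Ioi_self).norm
  refine (hpow.const_mul C).mono' (hcont.aestronglyMeasurable measurableSet_Ioo) ?_
  filter_upwards [ae_restrict_mem measurableSet_Ioo] with u hu
  have hu₁ : 0 < u := hu.1
  rw [Real.norm_of_nonneg (by positivity)]
  calc u ^ (-r) * ‖betaFactor lam tau q 0 u‖ ≤ u ^ (-r) * (C * u ^ (-((1 - r) / 2))) := by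
        gcongr
        exact hC u hu
    _ = C * u ^ (-((1 + r) / 2)) := by
        rw [mul_left_comm, ← Real.rpow_add hu₁]
        ring_nf

theorem betaFactor_eqOn_zero_or_exists_integrableOn_pow_mul_norm {b : ℂ} (hlam : 0 < lam)
    (hint : IntegrableOn (fun t => betaFactor lam sig p a t * betaFactor lam tau q b (1 - t))
      (Ioo 0 1)) :
    EqOn (betaFactor lam sig p a) 0 (Ioi 0) ∨ ∃ (M : ℕ) (u₀ : ℝ), 0 < u₀ ∧
      IntegrableOn (fun u => u ^ M * ‖betaFactor lam tau q 0 u‖) (Ioo 0 u₀) := by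
  refine (eqOn_zero_or_exists_eventually_mul_norm_pow_le (analyticOnNhd_betaFactor hlam)
    isPreconnected_Ioi (mem_Ioi.2 one_pos)).imp id ?_
  rintro ⟨n, m, hm, hlow⟩
  obtain ⟨δ, hδ, hball⟩ := Metric.eventually_nhds_iff.1 hlow
  obtain ⟨j, hj⟩ := exists_nat_ge b.re
  have hsub : Ioo 0 (min δ 1) ⊆ Ioo 0 1 := Ioo_subset_Ioo_right (min_le_right _ _)
  refine ⟨n + j, min δ 1, by positivity, (((integrableOn_Ioo_comp_one_sub hint).mono_set
    hsub).norm.const_mul m⁻¹).mono' ?_ ?_⟩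
  · exact ((continuousOn_id.pow _).mul ((continuousOn_betaFactor hlam).mono
      Ioo_subset_Ioi_self).norm).aestronglyMeasurable measurableSet_Ioo
  filter_upwards [ae_restrict_mem measurableSet_Ioo] with u hu
  have hu₀ : 0 < u := hu.1
  have hlow_u : m * u ^ n ≤ ‖betaFactor lam sig p a (1 - u)‖ := by
    have := @hball (1 - u) (by
      rw [Real.dist_eq, sub_sub_cancel_left, abs_neg, abs_of_pos hu₀]
      exact hu.2.trans_le (min_le_left _ _))
    rwa [sub_sub_cancel_left, norm_neg, Real.norm_of_nonneg hu₀.le] at this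
  have hj_u : u ^ j ≤ u ^ b.re := by
    rw [← Real.rpow_natCast]
    exact Real.rpow_le_rpow_of_exponent_ge hu₀ (hsub hu).2.le hj
  rw [Real.norm_of_nonneg (by positivity), sub_sub_cancel, norm_mul, norm_betaFactor hu₀ (a := b),
    inv_mul_eq_div, le_div_iff₀ hm]
  calc u ^ (n + j) * ‖betaFactor lam tau q 0 u‖ * m
      = m * u ^ n * (u ^ j * ‖betaFactor lam tau q 0 u‖) := by ring
    _ ≤ ‖betaFactor lam sig p a (1 - u)‖ * (u ^ b.re * ‖betaFactor lam tau q 0 u‖) := by gcongr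

theorem one_sub_rpow_neg_mul_norm_betaFactor_mul (b : ℂ) {r : ℝ} (ht : t < 1) :
    (1 - t) ^ (-r) * ‖betaFactor lam sig p a t * betaFactor lam tau q 0 (1 - t)‖ =
      (1 - t) ^ (-r - b.re) *
        ‖betaFactor lam sig p a t * betaFactor lam tau q b (1 - t)‖ := by
  have ht' : 0 < 1 - t := sub_pos.2 ht
  have hsplit : (1 - t) ^ (-r) = (1 - t) ^ (-r - b.re) * (1 - t) ^ b.re := by
    rw [← Real.rpow_add ht', sub_add_cancel]
  rw [norm_mul, norm_mul, norm_betaFactor ht' (a := b), hsplit]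
  ring

theorem integrableOn_one_sub_rpow_neg_mul_norm_left {b : ℂ} {c : ℝ} (r : ℝ) (hc : c < 1)
    (hint : IntegrableOn (fun t => betaFactor lam sig p a t * betaFactor lam tau q b (1 - t))
      (Ioo 0 1)) :
    IntegrableOn (fun t => (1 - t) ^ (-r) *
      ‖betaFactor lam sig p a t * betaFactor lam tau q 0 (1 - t)‖) (Ioc 0 c) := by
  have hleft : IntegrableOn (fun t => (1 - t) ^ (-r - b.re) *
      ‖betaFactor lam sig p a t * betaFactor lam tau q b (1 - t)‖) (Icc 0 c) := by
    refine IntegrableOn.continuousOn_mul ?_ ?_ isCompact_Icc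
    · exact ContinuousOn.rpow_const (by fun_prop) fun t ht => .inl (by linarith [ht.2])
    · rw [integrableOn_Icc_iff_integrableOn_Ioo]
      exact IntegrableOn.mono_set hint.norm (Ioo_subset_Ioo_right hc.le)
  refine (hleft.mono_set Ioc_subset_Icc_self).congr_fun (fun t ht => ?_) measurableSet_Ioc
  exact (one_sub_rpow_neg_mul_norm_betaFactor_mul b (ht.2.trans_lt hc)).symm

theorem integrableOn_one_sub_rpow_neg_mul_norm_right {c r : ℝ} (hlam : 0 < lam) (hc : 0 < c)
    (hq : IntegrableOn (fun u => u ^ (-r) * ‖betaFactor lam tau q 0 u‖) (Ioo 0 1)) :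
    IntegrableOn (fun t => (1 - t) ^ (-r) *
      ‖betaFactor lam sig p a t * betaFactor lam tau q 0 (1 - t)‖) (Ioo c 1) := by
  have hright : IntegrableOn (fun t => ‖betaFactor lam sig p a t‖ *
      ((1 - t) ^ (-r) * ‖betaFactor lam tau q 0 (1 - t)‖)) (Icc c 1) := by
    refine IntegrableOn.continuousOn_mul ?_ ?_ isCompact_Icc
    · exact ((continuousOn_betaFactor hlam).mono fun t ht => hc.trans_le ht.1).norm
    · rw [integrableOn_Icc_iff_integrableOn_Ioo]
      exact (integrableOn_Ioo_comp_one_sub hq).mono_set (Ioo_subset_Ioo_left hc.le)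
  refine (hright.mono_set Ioo_subset_Icc_self).congr_fun (fun t _ => ?_) measurableSet_Ioo
  simp only [norm_mul, mul_left_comm]

theorem exists_integrableOn_one_sub_rpow_neg_mul_norm {e : ℂ} (hlam : 0 < lam) (htau : 0 < tau)
    (hint : IntegrableOn (fun t => betaFactor lam sig p a t * betaFactor lam tau q (-e) (1 - t))
      (Ioo 0 1)) :
    ∃ r : ℝ, 0 < r ∧ e.re ≤ r ∧ IntegrableOn (fun t => (1 - t) ^ (-r) *
      ‖betaFactor lam sig p a t * betaFactor lam tau q 0 (1 - t)‖) (Ioo 0 1) := by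
  rcases lt_or_ge 0 e.re with he | he
  · refine ⟨e.re, he, le_rfl, IntegrableOn.congr_fun hint.norm (fun t ht => ?_) measurableSet_Ioo⟩
    simp only [one_sub_rpow_neg_mul_norm_betaFactor_mul (-e) ht.2, neg_re, sub_neg_eq_add,
      neg_add_cancel, Real.rpow_zero, one_mul]
  refine ⟨1 / 2, by norm_num, by linarith, ?_⟩
  rcases betaFactor_eqOn_zero_or_exists_integrableOn_pow_mul_norm hlam hint with
    hzero | ⟨M, u₀, hu₀, hM⟩
  · refine integrableOn_zero.congr_fun (fun t ht => ?_) measurableSet_Ioo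
    simp only [hzero (mem_Ioi.2 ht.1), Pi.zero_apply, zero_mul, norm_zero, mul_zero]
  rw [← Ioc_union_Ioo_eq_Ioo (by norm_num : (0 : ℝ) ≤ 1 / 2) (by norm_num : (1 / 2 : ℝ) < 1)]
  exact (integrableOn_one_sub_rpow_neg_mul_norm_left _ (by norm_num) hint).union
    (integrableOn_one_sub_rpow_neg_mul_norm_right hlam (by norm_num)
      (integrableOn_rpow_neg_mul_norm_betaFactor hlam htau hu₀ (by norm_num) hM))

theorem extBeta_eq_integral_betaFactor (e1 e2 : ℂ) :
    extBeta lam sig tau p q e1 e2 =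
      ∫ t in Ioo (0 : ℝ) 1,
        betaFactor lam sig p (e1 - 1) t * betaFactor lam tau q (e2 - 1) (1 - t) := by
  refine integral_congr_ae (.of_forall fun t => ?_)
  simp only [betaFactor, ofReal_sub, ofReal_one]
  ring

end BetaFactor

theorem extBeta_summation_formula_general {lam tau : ℝ} (sig : ℝ) (hlam : 0 < lam) (htau : 0 < tau)
    {p q e1 e2 : ℂ}
    (hint : IntegrableOn (fun t : ℝ =>
        (t : ℂ) ^ (e1 - 1) * (1 - (t : ℂ)) ^ (-e2) *
          mlE lam (-p / (t : ℂ) ^ (sig : ℂ)) * mlE lam (-q / (1 - (t : ℂ)) ^ (tau : ℂ)))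
      (Ioo (0:ℝ) 1)) :
    HasSum (fun n : ℕ => (ascPochhammer ℂ n).eval e2 / n.factorial *
        extBeta lam sig tau p q (e1 + n) 1)
      (extBeta lam sig tau p q e1 (1 - e2)) := by
  have hint' : IntegrableOn (fun t => betaFactor lam sig p (e1 - 1) t *
      betaFactor lam tau q (-e2) (1 - t)) (Ioo 0 1) := by
    refine hint.congr_fun (fun t _ => ?_) measurableSet_Ioo
    simp only [betaFactor, ofReal_sub, ofReal_one]
    ring
  obtain ⟨r, hr, her, hweight⟩ := exists_integrableOn_one_sub_rpow_neg_mul_norm hlam htau hint'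
  have hcont : ContinuousOn (fun t => betaFactor lam sig p (e1 - 1) t *
      betaFactor lam tau q 0 (1 - t)) (Ioo 0 1) :=
    ((continuousOn_betaFactor hlam).mono Ioo_subset_Ioi_self).mul
      ((continuousOn_betaFactor_one_sub hlam).mono Ioo_subset_Iio_self)
  convert hasSum_ascPochhammer_mul_integral hr her
    (hcont.aestronglyMeasurable measurableSet_Ioo) hweight using 1
  · funext n
    rw [extBeta_eq_integral_betaFactor]
    congr 1
    refine setIntegral_congr_fun measurableSet_Ioo fun t ht => ?_
    simp only [sub_self, show e1 + n - 1 = n + (e1 - 1) by ring, betaFactor_add _ ht.1,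
      cpow_natCast, mul_assoc]
  · rw [extBeta_eq_integral_betaFactor]
    refine setIntegral_congr_fun measurableSet_Ioo fun t ht => ?_
    have hfac := betaFactor_add (lam := lam) (sig := tau) (p := q) (a := -e2) 0 (sub_pos.2 ht.2)
    rw [add_zero, ofReal_sub, ofReal_one] at hfac
    simp only [sub_sub_cancel_left, hfac, mul_left_comm]

theorem extBeta_summation_formula (lam sig tau : ℝ) (hlam : 0 < lam) (hsig : 0 < sig)
    (htau : 0 < tau) (p q e1 e2 : ℂ) (hp : 0 < p.re) (hq : 0 < q.re) (he1 : 0 < e1.re)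
    (hint : IntegrableOn (fun t : ℝ =>
        (t : ℂ) ^ (e1 - 1) * (1 - (t : ℂ)) ^ (-e2) *
          mlE lam (-p / (t : ℂ) ^ (sig : ℂ)) * mlE lam (-q / (1 - (t : ℂ)) ^ (tau : ℂ)))
      (Ioo (0:ℝ) 1)) :
    extBeta lam sig tau p q e1 (1 - e2)
      = ∑' n : ℕ, (ascPochhammer ℂ n).eval e2 / (Nat.factorial n : ℂ) *
          extBeta lam sig tau p q (e1 + n) 1 :=
  (extBeta_summation_formula_general sig hlam htau hint).tsum_eq.symm
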